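/- Let n ≥ 2. There exists a social choice function f : S₀ⁿ → A that is onto and weakly group strategy-proof but is neither efficient nor tops-only. (In particular, the rule f* defined by f*(R) = τ(R_1) if R_1 ≠ R⁰, f*(R) = 0 if R_1 = R⁰ and 0 P_2 1, and f*(R) = 1 otherwise, has these properties.) -/

import Mathlib

/-- The set of alternatives: the closed interval [0,1]. -/
abbrev A : Type := Set.Icc (0:ℝ) 1

def zeroA : A := ⟨0, by constructor <;> norm_num⟩
def oneA : A := ⟨1, by constructor <;> norm_num⟩

/-- A preference: a complete (total) and transitive binary relation on A. -/
structure Pref : Type where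
  rel : A → A → Prop
  total : ∀ a b : A, rel a b ∨ rel b a
  trans : ∀ a b c : A, rel a b → rel b c → rel a c

/-- Strict part of a preference. -/
def Pref.P (R : Pref) (a b : A) : Prop := R.rel a b ∧ ¬ R.rel b a

/-- `p` is a peak of `R`: `R` is single-peaked with peak `p`. -/
def Pref.IsPeak (R : Pref) (p : A) : Prop :=
  ∀ a b : A, ((p ≤ a ∧ a < b) ∨ (b < a ∧ a ≤ p)) → R.P a b

/-- Single-peaked preferences. -/
def SinglePeaked (R : Pref) : Prop := ∃ p : A, R.IsPeak p

/-- The completely indifferent preference R⁰. -/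
def R0 : Pref :=
  ⟨fun _ _ => True, fun _ _ => Or.inl trivial, fun _ _ _ _ _ => trivial⟩

/-- The augmented domain S₀ = S ∪ {R⁰}. -/
def S0 : Type := {R : Pref // SinglePeaked R ∨ R = R0}

/-- The completely indifferent profile R^{0N}. -/
def indiffProfile (n : ℕ) : Fin n → S0 := fun _ => ⟨R0, Or.inr rfl⟩

open Classical in
/-- The peak of a single-peaked preference (junk value `zeroA` otherwise). -/
noncomputable def peak (R : Pref) : A :=
  if h : SinglePeaked R then h.choose else zeroA

/-- τ̲(R): the smallest peak among non-indifferent agents (as a real number). -/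
noncomputable def tmin {n : ℕ} (R : Fin n → S0) : ℝ :=
  sInf {x : ℝ | ∃ i : Fin n, (R i).1 ≠ R0 ∧ ((peak (R i).1 : ℝ) = x)}

/-- τ̄(R): the largest peak among non-indifferent agents (as a real number). -/
noncomputable def tmax {n : ℕ} (R : Fin n → S0) : ℝ :=
  sSup {x : ℝ | ∃ i : Fin n, (R i).1 ≠ R0 ∧ ((peak (R i).1 : ℝ) = x)}

/-- Onto-ness. -/
def Onto {n : ℕ} (f : (Fin n → S0) → A) : Prop := ∀ a : A, ∃ R : Fin n → S0, f R = a

/-- (Individual) strategy-proofness. -/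
def StrategyProof {n : ℕ} (f : (Fin n → S0) → A) : Prop :=
  ∀ (R : Fin n → S0) (i : Fin n) (Ri' : S0),
    (R i).1.rel (f R) (f (Function.update R i Ri'))

/-- No profitable deviation by the coalition `S`. -/
def CoalitionSP {n : ℕ} (f : (Fin n → S0) → A) (S : Finset (Fin n)) : Prop :=
  ¬ ∃ R R' : Fin n → S0,
      (∀ i ∉ S, R' i = R i) ∧
      (∀ i ∈ S, (R i).1.rel (f R') (f R)) ∧
      (∃ j ∈ S, (R j).1.P (f R') (f R))

/-- Group strategy-proofness. -/
def GroupSP {n : ℕ} (f : (Fin n → S0) → A) : Prop :=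
  ∀ S : Finset (Fin n), S.Nonempty → CoalitionSP f S

/-- Pairwise strategy-proofness. -/
def PairwiseSP {n : ℕ} (f : (Fin n → S0) → A) : Prop :=
  ∀ S : Finset (Fin n), S.Nonempty → S.card ≤ 2 → CoalitionSP f S

/-- No deviation making every member of `S` strictly better off. -/
def WeakCoalitionSP {n : ℕ} (f : (Fin n → S0) → A) (S : Finset (Fin n)) : Prop :=
  ¬ ∃ R R' : Fin n → S0,
      (∀ i ∉ S, R' i = R i) ∧
      (∀ i ∈ S, (R i).1.P (f R') (f R))

/-- Weak group strategy-proofness. -/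
def WeakGroupSP {n : ℕ} (f : (Fin n → S0) → A) : Prop :=
  ∀ S : Finset (Fin n), S.Nonempty → WeakCoalitionSP f S

/-- `a` is efficient at the profile `R`. -/
def EfficientAt {n : ℕ} (R : Fin n → S0) (a : A) : Prop :=
  ¬ ∃ b : A, b ≠ a ∧ (∀ i : Fin n, (R i).1.rel b a) ∧ (∃ j : Fin n, (R j).1.P b a)

/-- Efficiency of a social choice function. -/
def Efficient {n : ℕ} (f : (Fin n → S0) → A) : Prop := ∀ R : Fin n → S0, EfficientAt R (f R)

/-- The tops-only property. -/
def TopsOnly {n : ℕ} (f : (Fin n → S0) → A) : Prop :=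
  ∀ R R' : Fin n → S0,
    (∀ i : Fin n, (R i).1 = R0 ↔ (R' i).1 = R0) →
    (∀ i : Fin n, (R i).1 ≠ R0 → peak (R i).1 = peak (R' i).1) →
    f R = f R'

/-- Target rules with a default. -/
def IsTargetRule {n : ℕ} (f : (Fin n → S0) → A) : Prop :=
  ∃ x y : A, f (indiffProfile n) = y ∧
    ∀ R : Fin n → S0, R ≠ indiffProfile n →
      ((tmin R ≤ (x : ℝ) ∧ (x : ℝ) ≤ tmax R) → f R = x) ∧
      ((x : ℝ) < tmin R → (f R : ℝ) = tmin R) ∧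
      (tmax R < (x : ℝ) → (f R : ℝ) = tmax R)

/-!
In `f*` agent 1 dictates, and when indifferent leaves the choice between `0` and `1` to agent 2.
A strictly improving coalition contains neither an indifferent agent 1 nor an agent 1 who already
receives its peak, so it can only act on the binary choice, which agent 2 settles truthfully.
If agent 1 is indifferent and all others share the peak `1/2`, then `1/2` dominates the outcome,
while how the others rank `0` against `1`, and hence the outcome, is not determined by that peak.
-/

namespace Pref

variable {R : Pref} {a b p q : A}

theorem not_P_self (R : Pref) (a : A) : ¬ R.P a a := fun h => h.2 h.1

theorem not_P_R0 (a b : A) : ¬ R0.P a b := fun h => h.2 trivial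

theorem P.ne_R0 (h : R.P a b) : R ≠ R0 := by
  rintro rfl
  exact not_P_R0 a b h

namespace IsPeak

theorem P_of_ne (hp : R.IsPeak p) (h : a ≠ p) : R.P p a :=
  hp p a (h.lt_or_gt.symm.imp (⟨le_rfl, ·⟩) (⟨·, le_rfl⟩))

theorem not_P (hp : R.IsPeak p) (a : A) : ¬ R.P a p := by
  rcases eq_or_ne a p with rfl | h
  · exact not_P_self R a
  · exact fun hP => (hp.P_of_ne h).2 hP.1

protected theorem unique (hp : R.IsPeak p) (hq : R.IsPeak q) : p = q := by
  by_contra h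
  exact hp.not_P q (hq.P_of_ne h)

theorem ne_R0 (hp : R.IsPeak p) : R ≠ R0 :=
  let ⟨_, ha⟩ := exists_ne p
  (hp.P_of_ne ha).ne_R0

theorem peak_eq (hp : R.IsPeak p) : peak R = p := by
  have h : SinglePeaked R := ⟨p, hp⟩
  rw [peak, dif_pos h]
  exact h.choose_spec.unique hp

/-- A single-peaked preference as an element of the augmented domain `S₀`. -/
def toS0 (hp : R.IsPeak p) : S0 := ⟨R, Or.inl ⟨p, hp⟩⟩

end IsPeak

section Utility

variable {α : Type*} [LinearOrder α] {u : A → α}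

/-- The preference on alternatives represented by the utility function `u`. -/
def ofUtility (u : A → α) : Pref where
  rel a b := u b ≤ u a
  total _ _ := le_total _ _
  trans _ _ _ hab hbc := hbc.trans hab

theorem ofUtility_P : (ofUtility u).P a b ↔ u b < u a := lt_iff_le_not_ge.symm

theorem isPeak_ofUtility (hmono : StrictMonoOn u (Set.Iic p))
    (hanti : StrictAntiOn u (Set.Ici p)) : (ofUtility u).IsPeak p := by
  rintro a b (⟨hpa, hab⟩ | ⟨hba, hap⟩) <;> rw [ofUtility_P]
  · exact hanti hpa (hpa.trans hab.le) hab
  · exact hmono (hba.le.trans hap) hap hba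

end Utility

end Pref

namespace S0

/-- The completely indifferent preference `R⁰` as an element of the augmented domain `S₀`. -/
def indifferent : S0 := ⟨R0, Or.inr rfl⟩

theorem isPeak_peak {r : S0} (h : r.1 ≠ R0) : r.1.IsPeak (peak r.1) := by
  obtain ⟨p, hp⟩ := r.2.resolve_right h
  rwa [hp.peak_eq]

end S0

/-- The piecewise linear utility with maximum `0` at `p`, slope `1` to the left of `p` and slope
`-k` to the right; varying `k` changes the ranking across `p` but not the peak. -/
def tent (p : A) (k : ℝ) (x : A) : ℝ := min ((x : ℝ) - p) (k * (p - x))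

section Tent

variable {p x : A} {k : ℝ}

theorem tent_of_le (hk : 0 ≤ k) (h : x ≤ p) : tent p k x = x - p := by
  have h : (x : ℝ) ≤ p := h
  exact min_eq_left (by nlinarith)

theorem tent_of_ge (hk : 0 ≤ k) (h : p ≤ x) : tent p k x = k * (p - x) := by
  have h : (p : ℝ) ≤ x := h
  exact min_eq_right (by nlinarith)

theorem isPeak_tent (p : A) (hk : 0 < k) : (Pref.ofUtility (tent p k)).IsPeak p := by
  refine Pref.isPeak_ofUtility (fun x hx y hy hxy => ?_) fun x hx y hy hxy => ?_
  · rw [tent_of_le hk.le hx, tent_of_le hk.le hy]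
    exact sub_lt_sub_right (Subtype.coe_lt_coe.2 hxy) _
  · rw [tent_of_ge hk.le hx, tent_of_ge hk.le hy]
    exact mul_lt_mul_of_pos_left (sub_lt_sub_left (Subtype.coe_lt_coe.2 hxy) _) hk

end Tent

section Rules

variable {n : ℕ} {i j : Fin n} {g : (Fin n → S0) → A} {R R' : Fin n → S0} {a b c : A} {r r' : S0}

open Classical in
/-- The rule that selects the peak of agent `i`, and follows the rule `g` when `i` is
indifferent. -/
noncomputable def dictatorWithDefault (i : Fin n) (g : (Fin n → S0) → A) (R : Fin n → S0) : A :=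
  if (R i).1 = R0 then g R else peak (R i).1

open Classical in
/-- The rule that selects `a` if agent `j` strictly prefers it to `b`, and `b` otherwise. With
`a = 0`, `b = 1` it is the default rule of the paper's `f*`. -/
noncomputable def pairChoice (j : Fin n) (a b : A) (R : Fin n → S0) : A :=
  if (R j).1.P a b then a else b

theorem dictatorWithDefault_of_eq (h : (R i).1 = R0) : dictatorWithDefault i g R = g R :=
  if_pos h

theorem dictatorWithDefault_of_ne (h : (R i).1 ≠ R0) :
    dictatorWithDefault i g R = peak (R i).1 :=
  if_neg h

theorem pairChoice_of_P (h : (R j).1.P a b) : pairChoice j a b R = a :=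
  if_pos h

theorem pairChoice_of_not_P (h : ¬ (R j).1.P a b) : pairChoice j a b R = b :=
  if_neg h

theorem not_P_dictatorWithDefault (R : Fin n → S0) (a : A) :
    ¬ (R i).1.P a (dictatorWithDefault i g R) := by
  by_cases h : (R i).1 = R0
  · rw [h]
    exact Pref.not_P_R0 _ _
  · rw [dictatorWithDefault_of_ne h]
    exact (S0.isPeak_peak h).not_P a

theorem onto_dictatorWithDefault (i : Fin n) (g : (Fin n → S0) → A) :
    Onto (dictatorWithDefault i g) := fun a =>
  have ha := isPeak_tent a one_pos
  ⟨fun _ => ha.toS0, (dictatorWithDefault_of_ne ha.ne_R0).trans ha.peak_eq⟩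

theorem WeakGroupSP.dictatorWithDefault (hg : WeakGroupSP g) (i : Fin n) :
    WeakGroupSP (dictatorWithDefault i g) := by
  rintro S hS ⟨R, R', hout, himp⟩
  have hi : i ∉ S := fun hi => not_P_dictatorWithDefault R _ (himp i hi)
  have hRi : R' i = R i := hout i hi
  by_cases h : (R i).1 = R0
  · have h' : (R' i).1 = R0 := by rw [hRi, h]
    simp only [dictatorWithDefault_of_eq h, dictatorWithDefault_of_eq h'] at himp
    exact hg S hS ⟨R, R', hout, himp⟩
  · have h' : (R' i).1 ≠ R0 := by rwa [hRi]
    obtain ⟨k, hk⟩ := hS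
    have hPk := himp k hk
    rw [dictatorWithDefault_of_ne h, dictatorWithDefault_of_ne h', hRi] at hPk
    exact Pref.not_P_self _ _ hPk

theorem not_P_pairChoice (R R' : Fin n → S0) :
    ¬ (R j).1.P (pairChoice j a b R') (pairChoice j a b R) := by
  have hR' : pairChoice j a b R' = a ∨ pairChoice j a b R' = b :=
    (em _).imp pairChoice_of_P pairChoice_of_not_P
  by_cases h : (R j).1.P a b
  · rw [pairChoice_of_P h]
    rcases hR' with h' | h' <;> rw [h']
    · exact Pref.not_P_self _ _
    · exact fun hba => h.2 hba.1
  · rw [pairChoice_of_not_P h]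
    rcases hR' with h' | h' <;> rw [h']
    · exact h
    · exact Pref.not_P_self _ _

theorem weakGroupSP_pairChoice (j : Fin n) (a b : A) : WeakGroupSP (pairChoice j a b) := by
  rintro S ⟨k, hk⟩ ⟨R, R', hout, himp⟩
  have hj : j ∉ S := fun hj => not_P_pairChoice R R' (himp j hj)
  have heq : pairChoice j a b R' = pairChoice j a b R := by
    rw [pairChoice, pairChoice, hout j hj]
  have hPk := himp k hk
  rw [heq] at hPk
  exact Pref.not_P_self _ _ hPk

/-- The profile in which agent `i` is completely indifferent and all other agents have the
preference `r`. -/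
def unanimousExcept (i : Fin n) (r : S0) : Fin n → S0 :=
  Function.update (fun _ => r) i S0.indifferent

theorem unanimousExcept_self (i : Fin n) (r : S0) : (unanimousExcept i r i).1 = R0 := by
  rw [unanimousExcept, Function.update_self, S0.indifferent]

theorem unanimousExcept_of_ne (h : j ≠ i) (r : S0) : unanimousExcept i r j = r :=
  Function.update_of_ne h _ _

theorem dictatorWithDefault_pairChoice_of_P (hji : j ≠ i) (h : r.1.P a b) :
    dictatorWithDefault i (pairChoice j a b) (unanimousExcept i r) = a := by
  rw [dictatorWithDefault_of_eq (unanimousExcept_self i r), pairChoice_of_P]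
  rwa [unanimousExcept_of_ne hji]

theorem dictatorWithDefault_pairChoice_of_not_P (hji : j ≠ i) (h : ¬ r.1.P a b) :
    dictatorWithDefault i (pairChoice j a b) (unanimousExcept i r) = b := by
  rw [dictatorWithDefault_of_eq (unanimousExcept_self i r), pairChoice_of_not_P]
  rwa [unanimousExcept_of_ne hji]

theorem not_efficientAt_unanimousExcept (hji : j ≠ i) (h : r.1.P c b) :
    ¬ EfficientAt (unanimousExcept i r) b := by
  have hcb : c ≠ b := by
    rintro rfl
    exact Pref.not_P_self _ _ h
  refine not_not_intro ⟨c, hcb, fun k => ?_, j, ?_⟩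
  · rcases eq_or_ne k i with rfl | hk
    · rw [unanimousExcept_self]
      trivial
    · rw [unanimousExcept_of_ne hk]
      exact h.1
  · rwa [unanimousExcept_of_ne hji]

theorem not_efficient_dictatorWithDefault_pairChoice (hji : j ≠ i) (hab : ¬ r.1.P a b)
    (hcb : r.1.P c b) : ¬ Efficient (dictatorWithDefault i (pairChoice j a b)) := fun heff =>
  not_efficientAt_unanimousExcept hji hcb
    (dictatorWithDefault_pairChoice_of_not_P hji hab ▸ heff (unanimousExcept i r))

theorem TopsOnly.unanimousExcept_eq (hg : TopsOnly g) (i : Fin n) (hr : r.1 ≠ R0)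
    (hr' : r'.1 ≠ R0) (hpeak : peak r.1 = peak r'.1) :
    g (unanimousExcept i r) = g (unanimousExcept i r') := by
  refine hg _ _ (fun k => ?_) fun k hk => ?_
  · rcases eq_or_ne k i with rfl | hk
    · simp only [unanimousExcept_self]
    · simp only [unanimousExcept_of_ne hk, hr, hr']
  · have hki : k ≠ i := by
      rintro rfl
      exact hk (unanimousExcept_self k r)
    rwa [unanimousExcept_of_ne hki, unanimousExcept_of_ne hki]

theorem not_topsOnly_dictatorWithDefault_pairChoice (hji : j ≠ i) (hr' : r'.1 ≠ R0)
    (hpeak : peak r.1 = peak r'.1) (h : r.1.P a b) (h' : ¬ r'.1.P a b) :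
    ¬ TopsOnly (dictatorWithDefault i (pairChoice j a b)) := by
  intro htops
  have hab := htops.unanimousExcept_eq i h.ne_R0 hr' hpeak
  rw [dictatorWithDefault_pairChoice_of_P hji h,
    dictatorWithDefault_pairChoice_of_not_P hji h'] at hab
  subst hab
  exact Pref.not_P_self _ _ h

end Rules

/-- The midpoint of the interval of alternatives. -/
noncomputable def halfA : A := ⟨1 / 2, by constructor <;> norm_num⟩

theorem ofUtility_tent_halfA_P_zeroA_oneA_iff {k : ℝ} (hk : 0 ≤ k) :
    (Pref.ofUtility (tent halfA k)).P zeroA oneA ↔ 1 < k := by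
  have hzero : zeroA ≤ halfA := halfA.2.1
  have hone : halfA ≤ oneA := halfA.2.2
  rw [Pref.ofUtility_P, tent_of_ge hk hone, tent_of_le hk hzero]
  norm_num [zeroA, oneA, halfA]

theorem oneA_ne_halfA : oneA ≠ halfA := by
  norm_num [oneA, halfA, Subtype.ext_iff]

/-- For n ≥ 2, there exists an SCF that is onto and weakly group
strategy-proof but neither efficient nor tops-only. -/
theorem stmt_13 (n : ℕ) (hn : 2 ≤ n) :
    ∃ f : (Fin n → S0) → A,
      Onto f ∧ WeakGroupSP f ∧ ¬ Efficient f ∧ ¬ TopsOnly f := by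
  let i : Fin n := ⟨0, by lia⟩
  let j : Fin n := ⟨1, by lia⟩
  have hji : j ≠ i := by simp [i, j]
  have hpeak₁ := isPeak_tent halfA one_pos
  have hpeak₂ := isPeak_tent halfA two_pos
  have hnot_P : ¬ hpeak₁.toS0.1.P zeroA oneA :=
    mt (ofUtility_tent_halfA_P_zeroA_oneA_iff zero_le_one).1 (lt_irrefl 1)
  have hP : hpeak₂.toS0.1.P zeroA oneA :=
    (ofUtility_tent_halfA_P_zeroA_oneA_iff zero_le_two).2 one_lt_two
  exact ⟨dictatorWithDefault i (pairChoice j zeroA oneA),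
    onto_dictatorWithDefault i _,
    (weakGroupSP_pairChoice j zeroA oneA).dictatorWithDefault i,
    not_efficient_dictatorWithDefault_pairChoice hji hnot_P (hpeak₁.P_of_ne oneA_ne_halfA),
    not_topsOnly_dictatorWithDefault_pairChoice hji hpeak₁.ne_R0
      (hpeak₂.peak_eq.trans hpeak₁.peak_eq.symm) hP hnot_P⟩
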